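/- Suppose n ≡ 3 (mod 4) and n ≥ 3. Then every (n−1)/2-isometry of C_n is an {(n−1)/2, (n+1)/2, n}-isometry. -/

import Mathlib

/-!
Let `φ` preserve the distance `p` between binary words of length `n = 2 * p + 1`, with `p` odd. Two
words have a common neighbour at distance `p` only if their distance is some `2 * e` with `e ≤ p`,
and then twice the number of such neighbours is `centralBinom e * centralBinom (p + 1 - e)`. By
strict log-convexity of the central binomial coefficients this is smallest exactly at
`e = (p + 1) / 2`, and `φ` preserves the number of common neighbours, so it preserves the distance
`p + 1`. Finally, two words are antipodal (at distance `n`) iff the sphere of radius `p` around one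
is contained in the sphere of radius `p + 1` around the other, so `φ` preserves antipodality.
-/

open Finset Function
open scoped symmDiff

theorem centralBinom_succ_mul_lt {a b : ℕ} (h : a < b) :
    (a + 1).centralBinom * b.centralBinom < a.centralBinom * (b + 1).centralBinom := by
  have ha := Nat.succ_mul_centralBinom_succ a
  have hb := Nat.succ_mul_centralBinom_succ b
  have hpos : 0 < a.centralBinom * b.centralBinom :=
    Nat.mul_pos a.centralBinom_pos b.centralBinom_pos
  refine lt_of_mul_lt_mul_left (a := (a + 1) * (b + 1)) ?_ (Nat.zero_le _)
  calc (a + 1) * (b + 1) * ((a + 1).centralBinom * b.centralBinom)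
      = 2 * (2 * a + 1) * (b + 1) * (a.centralBinom * b.centralBinom) := by
        linear_combination (b + 1) * b.centralBinom * ha
    _ < 2 * (2 * b + 1) * (a + 1) * (a.centralBinom * b.centralBinom) :=
        Nat.mul_lt_mul_of_pos_right (by linarith) hpos
    _ = (a + 1) * (b + 1) * (a.centralBinom * (b + 1).centralBinom) := by
        linear_combination -((a + 1) * a.centralBinom * hb)

theorem centralBinom_add_sq_lt (a : ℕ) {d : ℕ} (hd : d ≠ 0) :
    (a + d).centralBinom ^ 2 < a.centralBinom * (a + 2 * d).centralBinom := by
  induction d, Nat.one_le_iff_ne_zero.2 hd using Nat.le_induction generalizing a with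
  | base => simpa only [sq] using centralBinom_succ_mul_lt (Nat.lt_succ_self a)
  | succ d hd ih =>
    calc (a + (d + 1)).centralBinom ^ 2
        = (a + 1 + d).centralBinom ^ 2 := by rw [add_assoc, add_comm 1 d]
      _ < (a + 1).centralBinom * (a + 1 + 2 * d).centralBinom := ih _ (by omega)
      _ < a.centralBinom * (a + 1 + 2 * d + 1).centralBinom :=
        centralBinom_succ_mul_lt (by omega)
      _ = a.centralBinom * (a + 2 * (d + 1)).centralBinom := by
        rw [show a + 1 + 2 * d + 1 = a + 2 * (d + 1) by ring]

theorem centralBinom_sq_lt_mul {a b m : ℕ} (hab : a + b = 2 * m) (ha : a ≠ m) :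
    m.centralBinom ^ 2 < a.centralBinom * b.centralBinom := by
  wlog h : a < m generalizing a b
  · rw [mul_comm]
    exact this (by omega) (by omega) (by omega)
  · obtain ⟨d, rfl⟩ := Nat.exists_eq_add_of_lt h
    obtain rfl : b = a + 2 * (d + 1) := by omega
    exact centralBinom_add_sq_lt a d.succ_ne_zero

theorem two_mul_choose_two_mul_add_one (m : ℕ) :
    2 * (2 * m + 1).choose m = (m + 1).centralBinom := by
  rw [Nat.centralBinom_eq_two_mul_choose, mul_add_one, Nat.choose_succ_succ, Nat.choose_symm_half,
    two_mul]

theorem card_symmDiff_add_two_mul_card_inter {α : Type*} [DecidableEq α] (s t : Finset α) :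
    #(s ∆ t) + 2 * #(s ∩ t) = #s + #t := by
  have hunion : #(s ∆ t) = #(s \ t) + #(t \ s) := card_union_of_disjoint disjoint_sdiff_sdiff
  have hs := card_sdiff_add_card_inter s t
  have ht := card_sdiff_add_card_inter t s
  rw [inter_comm] at ht
  omega

section BinaryWords

variable {ι : Type*} [Fintype ι]

theorem card_filter_card_inter_card_sdiff [DecidableEq ι] (D : Finset ι) (a b : ℕ) :
    #{S | #(S ∩ D) = a ∧ #(S \ D) = b} = (#D).choose a * (#Dᶜ).choose b := by
  rw [← card_powersetCard, ← card_powersetCard, ← card_product]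
  refine card_nbij (fun S => (S ∩ D, S \ D)) ?maps ?inj ?surj
  case maps =>
    intro S hS
    simpa [sdiff_eq_inter_compl] using hS
  case inj =>
    have hleft : LeftInverse (fun P => P.1 ∪ P.2) fun S : Finset ι => (S ∩ D, S \ D) :=
      fun S => sup_inf_sdiff S D
    exact hleft.injective.injOn
  case surj =>
    rintro ⟨A, B⟩ h
    simp only [mem_coe, mem_product, mem_powersetCard, subset_compl_iff_disjoint_right] at h
    obtain ⟨⟨hA, rfl⟩, hB, rfl⟩ := h
    have hinter : (A ∪ B) ∩ D = A := by
      rw [union_inter_distrib_right, inter_eq_left.2 hA, disjoint_iff_inter_eq_empty.1 hB,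
        union_empty]
    have hsdiff : (A ∪ B) \ D = B := by
      rw [union_sdiff_distrib, sdiff_eq_empty_iff_subset.2 hA, hB.sdiff_eq_left, empty_union]
    exact ⟨A ∪ B, by simp [hinter, hsdiff], by simp only [hinter, hsdiff]⟩

theorem eq_empty_or_eq_univ_of_card_inter_eq [DecidableEq ι] {D : Finset ι} {p c : ℕ} (hp : p ≠ 0)
    (hpι : p < Fintype.card ι) (hD : ∀ S : Finset ι, #S = p → #(S ∩ D) = c) :
    D = ∅ ∨ D = univ := by
  by_contra! ⟨hne, huniv⟩
  obtain ⟨i, hi⟩ := hne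
  obtain ⟨j, hj⟩ : ∃ j, j ∉ D := by simpa [eq_univ_iff_forall] using huniv
  have hij : i ≠ j := fun h => hj (h ▸ hi)
  obtain ⟨T, hT, hTcard⟩ : ∃ T ⊆ ({i, j} : Finset ι)ᶜ, #T = p - 1 :=
    exists_subset_card_eq (by rw [card_compl, card_pair hij]; omega)
  have hiT : i ∉ T := fun h => by simpa using hT h
  have hjT : j ∉ T := fun h => by simpa using hT h
  have hTi := hD (insert i T) (by rw [card_insert_of_notMem hiT]; omega)
  have hTj := hD (insert j T) (by rw [card_insert_of_notMem hjT]; omega)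
  rw [insert_inter_of_mem hi, card_insert_of_notMem (by simp [hiT])] at hTi
  rw [insert_inter_of_notMem hj] at hTj
  omega

/-- The set of coordinates in which two binary words differ, packaged as a bijection in the second
word: the inverse flips the coordinates of `x` that lie in a given set. -/
def diffEquiv [DecidableEq ι] (x : ι → ZMod 2) : (ι → ZMod 2) ≃ Finset ι where
  toFun y := {i | x i ≠ y i}
  invFun S i := if i ∈ S then x i + 1 else x i
  left_inv y := by
    have hflip : ∀ a b : ZMod 2, (if a ≠ b then a + 1 else a) = b := by decide
    funext i
    simpa using hflip (x i) (y i)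
  right_inv S := by
    ext i
    by_cases h : i ∈ S <;> simp [h]

theorem card_diffEquiv [DecidableEq ι] (x y : ι → ZMod 2) :
    #(diffEquiv x y) = hammingDist x y := rfl

theorem diffEquiv_symmDiff_diffEquiv [DecidableEq ι] (x y z : ι → ZMod 2) :
    diffEquiv x y ∆ diffEquiv x z = diffEquiv y z := by
  have hxor : ∀ a b c : ZMod 2, (a ≠ b ∧ ¬a ≠ c ∨ a ≠ c ∧ ¬a ≠ b) ↔ b ≠ c := by decide
  ext i
  simpa [diffEquiv, mem_symmDiff] using hxor (x i) (y i) (z i)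

theorem hammingDist_add_two_mul_card_inter [DecidableEq ι] (x y z : ι → ZMod 2) :
    hammingDist y z + 2 * #(diffEquiv x y ∩ diffEquiv x z) =
      hammingDist x y + hammingDist x z := by
  simpa only [diffEquiv_symmDiff_diffEquiv, card_diffEquiv] using
    card_symmDiff_add_two_mul_card_inter (diffEquiv x y) (diffEquiv x z)

theorem hammingDist_add_hammingDist_of_antipodal {x y : ι → ZMod 2}
    (hxy : hammingDist x y = Fintype.card ι) (z : ι → ZMod 2) :
    hammingDist x z + hammingDist y z = Fintype.card ι := by
  classical
  have huniv : diffEquiv x y = univ := by rwa [← card_eq_iff_eq_univ, card_diffEquiv]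
  have h := hammingDist_add_two_mul_card_inter x y z
  rw [huniv, univ_inter, card_diffEquiv] at h
  omega

theorem hammingDist_eq_card_of_sphere_subset {p : ℕ} (hι : Fintype.card ι = 2 * p + 1)
    {x y : ι → ZMod 2} (h : ∀ z, hammingDist x z = p → hammingDist y z = p + 1) :
    hammingDist x y = Fintype.card ι := by
  classical
  have hinter (S : Finset ι) (hS : #S = p) : 2 * #(S ∩ diffEquiv x y) + 1 = hammingDist x y := by
    obtain ⟨z, rfl⟩ := (diffEquiv x).surjective S
    have hz := hammingDist_add_two_mul_card_inter x y z
    rw [h z hS, inter_comm, ← card_diffEquiv x z, hS] at hz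
    omega
  obtain rfl | hp := eq_or_ne p 0
  · simpa [hι] using (hinter ∅ card_empty).symm
  have hconst (S : Finset ι) (hS : #S = p) :
      #(S ∩ diffEquiv x y) = (hammingDist x y - 1) / 2 := by
    have := hinter S hS
    omega
  have hpos : 0 < hammingDist x y := by
    obtain ⟨S, -, hS⟩ := exists_subset_card_eq (s := (univ : Finset ι)) (n := p)
      (by rw [card_univ]; omega)
    have := hinter S hS
    omega
  obtain hempty | huniv := eq_empty_or_eq_univ_of_card_inter_eq hp (by omega) hconst
  · rw [← card_diffEquiv, hempty, card_empty] at hpos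
    exact absurd hpos (lt_irrefl 0)
  · rw [← card_diffEquiv, huniv, card_univ]

/-- The common neighbours of `x` and `y` at distance `p`: the intersection of the two Hamming
spheres of radius `p`. -/
def commonSphere [DecidableEq ι] (p : ℕ) (x y : ι → ZMod 2) : Finset (ι → ZMod 2) :=
  {z | hammingDist x z = p ∧ hammingDist y z = p}

theorem mem_commonSphere [DecidableEq ι] {p : ℕ} {x y z : ι → ZMod 2} :
    z ∈ commonSphere p x y ↔ hammingDist x z = p ∧ hammingDist y z = p := by
  simp [commonSphere]

theorem exists_hammingDist_eq_two_mul [DecidableEq ι] {p : ℕ} {x y : ι → ZMod 2}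
    (h : (commonSphere p x y).Nonempty) : ∃ e ≤ p, hammingDist x y = 2 * e := by
  obtain ⟨z, hz⟩ := h
  obtain ⟨hxz, hyz⟩ := mem_commonSphere.1 hz
  have hd := hammingDist_add_two_mul_card_inter x y z
  have hle : #(diffEquiv x y ∩ diffEquiv x z) ≤ hammingDist x z :=
    card_le_card inter_subset_right
  exact ⟨#(diffEquiv x y ∩ diffEquiv x z), by omega, by omega⟩

theorem card_commonSphere [DecidableEq ι] {p e : ℕ} {x y : ι → ZMod 2}
    (hxy : hammingDist x y = 2 * e) (he : e ≤ p) :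
    #(commonSphere p x y) = (2 * e).choose e * (Fintype.card ι - 2 * e).choose (p - e) := by
  rw [← hxy, ← card_diffEquiv, ← card_compl, ← card_filter_card_inter_card_sdiff]
  refine card_equiv (diffEquiv x) fun z => ?_
  have hd := hammingDist_add_two_mul_card_inter x y z
  have hsplit := card_sdiff_add_card_inter (diffEquiv x z) (diffEquiv x y)
  rw [card_diffEquiv] at hsplit
  rw [inter_comm] at hd
  simp only [mem_commonSphere, mem_filter_univ]
  omega

theorem two_mul_card_commonSphere [DecidableEq ι] {p e : ℕ} (hι : Fintype.card ι = 2 * p + 1)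
    {x y : ι → ZMod 2} (hxy : hammingDist x y = 2 * e) (he : e ≤ p) :
    2 * #(commonSphere p x y) = e.centralBinom * (p + 1 - e).centralBinom := by
  rw [card_commonSphere hxy he, hι, show 2 * p + 1 - 2 * e = 2 * (p - e) + 1 by omega,
    mul_left_comm, two_mul_choose_two_mul_add_one, ← Nat.sub_add_comm he,
    Nat.centralBinom_eq_two_mul_choose e]

end BinaryWords

section Isometries

variable {ι : Type*} [Fintype ι]

/-- The defining property of a `p`-isometry, without bijectivity: pairs of words at Hamming
distance `p` are mapped to pairs at distance `p`. -/
def PreservesHammingDist {α : Type*} [DecidableEq α] (p : ℕ) (φ : (ι → α) → ι → α) : Prop :=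
  ∀ x y, hammingDist x y = p → hammingDist (φ x) (φ y) = p

namespace PreservesHammingDist

theorem hammingDist_map_eq_iff {α : Type*} [Finite α] [DecidableEq α] {p : ℕ}
    {φ : (ι → α) → ι → α} (hφ : PreservesHammingDist p φ) (hinj : Injective φ) {x y : ι → α} :
    hammingDist (φ x) (φ y) = p ↔ hammingDist x y = p := by
  refine ⟨fun h => ?_, hφ x y⟩
  let E : Set ((ι → α) × (ι → α)) := {q | hammingDist q.1 q.2 = p}
  have hmaps : Set.MapsTo (Prod.map φ φ) E E := fun q => hφ q.1 q.2
  have hbij : Set.BijOn (Prod.map φ φ) E E :=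
    (E.toFinite.injOn_iff_bijOn_of_mapsTo hmaps).1 (hinj.prodMap hinj).injOn
  have hmem : Prod.map φ φ (x, y) ∈ E := h
  obtain ⟨q, hq, hqxy⟩ := hbij.surjOn hmem
  obtain rfl : q = (x, y) := hinj.prodMap hinj hqxy
  exact hq

variable {p : ℕ} {φ : (ι → ZMod 2) → ι → ZMod 2}

theorem card_commonSphere_map [DecidableEq ι] (hφ : PreservesHammingDist p φ) (hinj : Injective φ)
    (x y : ι → ZMod 2) : #(commonSphere p (φ x) (φ y)) = #(commonSphere p x y) := by
  refine (card_bijective φ (Finite.injective_iff_bijective.1 hinj) fun z => ?_).symm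
  simp only [mem_commonSphere, hφ.hammingDist_map_eq_iff hinj]

theorem succ_of_odd (hφ : PreservesHammingDist p φ) (hinj : Injective φ)
    (hι : Fintype.card ι = 2 * p + 1) (hp : Odd p) : PreservesHammingDist (p + 1) φ := by
  classical
  obtain ⟨m, hm⟩ : ∃ m, p + 1 = 2 * m := even_iff_exists_two_mul.1 hp.add_one
  intro x y hxy
  have hcard : 2 * #(commonSphere p (φ x) (φ y)) = m.centralBinom ^ 2 := by
    rw [hφ.card_commonSphere_map hinj, two_mul_card_commonSphere hι (hxy.trans hm) (by omega),
      show p + 1 - m = m by omega, sq]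
  have hne : (commonSphere p (φ x) (φ y)).Nonempty := by
    have := pow_pos m.centralBinom_pos 2
    exact card_pos.1 (by omega)
  obtain ⟨e, he, hd⟩ := exists_hammingDist_eq_two_mul hne
  have hcard' := two_mul_card_commonSphere hι hd he
  have hem : e = m := by
    by_contra hem
    have := centralBinom_sq_lt_mul (b := p + 1 - e) (by omega) hem
    omega
  rw [hd, hem, hm]

theorem antipodal (hp : PreservesHammingDist p φ) (hp' : PreservesHammingDist (p + 1) φ)
    (hinj : Injective φ) (hι : Fintype.card ι = 2 * p + 1) :
    PreservesHammingDist (Fintype.card ι) φ := by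
  intro x y hxy
  refine hammingDist_eq_card_of_sphere_subset hι fun w hw => ?_
  obtain ⟨z, rfl⟩ := Finite.surjective_of_injective hinj w
  have hxz : hammingDist x z = p := (hp.hammingDist_map_eq_iff hinj).1 hw
  have hsum := hammingDist_add_hammingDist_of_antipodal hxy z
  exact hp' y z (by omega)

end PreservesHammingDist

theorem halfMinusOneIsometry_three_mod_four_general (hι : Fintype.card ι % 4 = 3)
    {φ : (ι → ZMod 2) → ι → ZMod 2} (hinj : Injective φ)
    (hφ : PreservesHammingDist ((Fintype.card ι - 1) / 2) φ) :
    PreservesHammingDist ((Fintype.card ι + 1) / 2) φ ∧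
      PreservesHammingDist (Fintype.card ι) φ := by
  obtain ⟨p, hp⟩ : ∃ p, Fintype.card ι = 2 * p + 1 := ⟨Fintype.card ι / 2, by omega⟩
  have hodd : Odd p := Nat.odd_iff.2 (by omega)
  rw [show (Fintype.card ι - 1) / 2 = p by omega] at hφ
  rw [show (Fintype.card ι + 1) / 2 = p + 1 by omega]
  have hφ' := hφ.succ_of_odd hinj hp hodd
  exact ⟨hφ', hφ.antipodal hφ' hinj hp⟩

end Isometries

/-- For `n ≡ 3 (mod 4)`, `n ≥ 3`, every `(n-1)/2`-isometry of the Boolean cube `C_n` is an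
`{(n-1)/2, (n+1)/2, n}`-isometry. -/
theorem halfMinusOneIsometry_three_mod_four (n : ℕ) (hn : n % 4 = 3) (hn3 : 3 ≤ n)
    (φ : (Fin n → ZMod 2) → Fin n → ZMod 2) (hbij : Function.Bijective φ)
    (hφ : ∀ x y, hammingDist x y = (n - 1) / 2 →
      hammingDist (φ x) (φ y) = (n - 1) / 2) :
    ∀ x y, (hammingDist x y = (n - 1) / 2 ∨ hammingDist x y = (n + 1) / 2 ∨
        hammingDist x y = n) →
      hammingDist (φ x) (φ y) = hammingDist x y := by
  obtain ⟨hmid, hanti⟩ := halfMinusOneIsometry_three_mod_four_general (φ := φ)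
    (by rwa [Fintype.card_fin]) hbij.injective (by rwa [Fintype.card_fin])
  rw [Fintype.card_fin] at hmid hanti
  rintro x y (h | h | h)
  · exact (hφ x y h).trans h.symm
  · exact (hmid x y h).trans h.symm
  · exact (hanti x y h).trans h.symm
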